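/- arXiv:2107.07433 — 2 statements merged into one kernel-verified Lean document; each statement's English description precedes it below -/
import Mathlib

section
/- The quotient 𝒫(ℕ)/Δ_d has an ω-limit: there exists a sequence (A_n)_{n∈ℕ} of subsets of ℕ with A_{n+1} ⊆ A_n and d(A_n) = 2^{−n} for every n (so each A_n is a nonzero element of 𝒫(ℕ)/Δ_d), such that there is no B ⊆ ℕ with d*(B) > 0 and d(B ∖ A_n) = 0 for all n; i.e., the descending chain ([A_n])_n has no nonzero lower bound in 𝒫(ℕ)/Δ_d. -/
open Filter Topology MeasureTheory
open scoped symmDiff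

/-- Upper asymptotic density: `d*(A) = limsup |A ∩ {0,…,n−1}|/n`. -/
noncomputable def upperDensity (A : Set ℕ) : ℝ :=
  Filter.limsup (fun n : ℕ => ((A ∩ Set.Iio n).ncard : ℝ) / n) Filter.atTop

/-- `A` has asymptotic density `α`: `lim |A ∩ {0,…,n−1}|/n = α`. -/
def HasDensity (A : Set ℕ) (α : ℝ) : Prop :=
  Filter.Tendsto (fun n : ℕ => ((A ∩ Set.Iio n).ncard : ℝ) / n) Filter.atTop (nhds α)

/-!
The set `A n` of multiples of `2 ^ n` has density `2⁻¹ ^ n`. Upper density is monotone and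
subadditive, so a set almost contained in every `A n` has upper density at most `2⁻¹ ^ n` for
every `n`, hence `0`.
-/

/-- The proportion of `{0, …, n - 1}` lying in `A`, whose limit (resp. limsup) is the density
(resp. upper density) of `A`; it is `0` for `n = 0`. -/
noncomputable def partialDensity (A : Set ℕ) (n : ℕ) : ℝ :=
  ((A ∩ Set.Iio n).ncard : ℝ) / n

section UpperDensity

variable {A B : Set ℕ}

theorem partialDensity_nonneg (A : Set ℕ) (n : ℕ) : 0 ≤ partialDensity A n := by
  unfold partialDensity
  positivity

theorem partialDensity_mono (h : A ⊆ B) (n : ℕ) : partialDensity A n ≤ partialDensity B n := by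
  have hfin : (B ∩ Set.Iio n).Finite := (Set.finite_Iio n).inter_of_right B
  unfold partialDensity
  gcongr

theorem partialDensity_le_one (A : Set ℕ) (n : ℕ) : partialDensity A n ≤ 1 := by
  refine div_le_one_of_le₀ ?_ n.cast_nonneg
  exact_mod_cast (Set.ncard_inter_le_ncard_right A _ (Set.finite_Iio n)).trans_eq
    (Set.ncard_Iio_nat n)

theorem partialDensity_union_le (A B : Set ℕ) (n : ℕ) :
    partialDensity (A ∪ B) n ≤ partialDensity A n + partialDensity B n := by
  unfold partialDensity
  rw [← add_div, Set.union_inter_distrib_right]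
  gcongr
  exact_mod_cast Set.ncard_union_le _ _

theorem isBoundedUnder_le_partialDensity (A : Set ℕ) :
    IsBoundedUnder (· ≤ ·) atTop (partialDensity A) :=
  isBoundedUnder_of ⟨1, partialDensity_le_one A⟩

theorem isBoundedUnder_ge_partialDensity (A : Set ℕ) :
    IsBoundedUnder (· ≥ ·) atTop (partialDensity A) :=
  isBoundedUnder_of ⟨0, partialDensity_nonneg A⟩

theorem upperDensity_nonneg (A : Set ℕ) : 0 ≤ upperDensity A :=
  le_limsup_of_frequently_le (.of_forall (partialDensity_nonneg A))
    (isBoundedUnder_le_partialDensity A)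

theorem upperDensity_mono (h : A ⊆ B) : upperDensity A ≤ upperDensity B :=
  limsup_le_limsup (.of_forall (partialDensity_mono h))
    (isBoundedUnder_ge_partialDensity A).isCoboundedUnder_le (isBoundedUnder_le_partialDensity B)

theorem upperDensity_union_le (A B : Set ℕ) :
    upperDensity (A ∪ B) ≤ upperDensity A + upperDensity B :=
  calc
    upperDensity (A ∪ B) ≤ limsup (partialDensity A + partialDensity B) atTop :=
      limsup_le_limsup (.of_forall (partialDensity_union_le A B))
        (isBoundedUnder_ge_partialDensity _).isCoboundedUnder_le
        (isBoundedUnder_le_add (isBoundedUnder_le_partialDensity A)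
          (isBoundedUnder_le_partialDensity B))
    _ ≤ upperDensity A + upperDensity B :=
      limsup_add_le (isBoundedUnder_ge_partialDensity A) (isBoundedUnder_le_partialDensity A)
        (isBoundedUnder_ge_partialDensity B).isCoboundedUnder_le
        (isBoundedUnder_le_partialDensity B)

theorem HasDensity.upperDensity_eq {α : ℝ} (h : HasDensity A α) : upperDensity A = α :=
  Tendsto.limsup_eq h

theorem upperDensity_le_add_sdiff (A B : Set ℕ) :
    upperDensity B ≤ upperDensity A + upperDensity (B \ A) :=
  calc
    upperDensity B ≤ upperDensity (A ∪ B \ A) := by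
      rw [Set.union_sdiff_self]
      exact upperDensity_mono Set.subset_union_right
    _ ≤ upperDensity A + upperDensity (B \ A) := upperDensity_union_le A (B \ A)

theorem upperDensity_eq_zero_of_tendsto_zero {ι : Type*} {l : Filter ι} [l.NeBot]
    {A : ι → Set ℕ} (hA : Tendsto (fun i => upperDensity (A i)) l (𝓝 0))
    (hB : ∀ i, upperDensity (B \ A i) = 0) : upperDensity B = 0 := by
  refine le_antisymm (ge_of_tendsto' hA fun i => ?_) (upperDensity_nonneg B)
  simpa only [hB, add_zero] using upperDensity_le_add_sdiff (A i) B

end UpperDensity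

theorem hasDensity_modEq {r : ℕ} (hr : 0 < r) (v : ℕ) :
    HasDensity {k | k ≡ v [MOD r]} (r : ℝ)⁻¹ := by
  have hcount (n : ℕ) : ({k | k ≡ v [MOD r]} ∩ Set.Iio n).ncard =
      n / r + if v % r < n % r then 1 else 0 := by
    rw [← Nat.count_modEq_card n hr, Nat.count_eq_card_filter_range, ← Set.ncard_coe_finset]
    congr 1
    ext k
    simp [and_comm]
  have hquot : Tendsto (fun n : ℕ => ((n / r : ℕ) : ℝ) / n) atTop (𝓝 (r : ℝ)⁻¹) := by
    have hfloor := (tendsto_nat_floor_mul_div_atTop (R := ℝ) (a := (r : ℝ)⁻¹)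
      (by positivity)).comp tendsto_natCast_atTop_atTop
    refine hfloor.congr fun n => ?_
    simp only [Function.comp_apply, inv_mul_eq_div, Nat.floor_div_eq_div]
  have hrem : Tendsto (fun n : ℕ => (if v % r < n % r then (1 : ℝ) else 0) / n) atTop (𝓝 0) :=
    tendsto_bdd_div_atTop_nhds_zero (b := 0) (B := 1)
      (.of_forall fun n => by split_ifs <;> norm_num)
      (.of_forall fun n => by split_ifs <;> norm_num) tendsto_natCast_atTop_atTop
  have hsum := hquot.add hrem
  rw [add_zero] at hsum
  refine hsum.congr fun n => ?_
  rw [hcount, ← add_div]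
  push_cast
  rfl

theorem hasDensity_dvd {r : ℕ} (hr : 0 < r) : HasDensity {k | r ∣ k} (r : ℝ)⁻¹ := by
  simpa only [Nat.modEq_zero_iff_dvd] using hasDensity_modEq hr 0

/-- Proposition 3: `𝒫(ℕ)/Δ_d` has an `ω`-limit. -/
theorem exists_omega_limit :
    ∃ A : ℕ → Set ℕ,
      (∀ n : ℕ, A (n + 1) ⊆ A n) ∧
      (∀ n : ℕ, HasDensity (A n) ((2 : ℝ)⁻¹ ^ n)) ∧
      ¬ ∃ B : Set ℕ, 0 < upperDensity B ∧ ∀ n : ℕ, HasDensity (B \ A n) 0 := by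
  have hdens (n : ℕ) : HasDensity {k | 2 ^ n ∣ k} ((2 : ℝ)⁻¹ ^ n) := by
    simpa only [Nat.cast_pow, Nat.cast_ofNat, inv_pow] using hasDensity_dvd (Nat.two_pow_pos n)
  refine ⟨fun n => {k | 2 ^ n ∣ k}, fun n k hk => (pow_dvd_pow 2 n.le_succ).trans hk, hdens, ?_⟩
  rintro ⟨B, hBpos, hB⟩
  have hlim : Tendsto (fun n => upperDensity {k | 2 ^ n ∣ k}) atTop (𝓝 0) := by
    simp only [(hdens _).upperDensity_eq]
    exact tendsto_pow_atTop_nhds_zero_of_lt_one (by norm_num) (by norm_num)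
  exact hBpos.ne' (upperDensity_eq_zero_of_tendsto_zero hlim fun n => (hB n).upperDensity_eq)
end

section
/- The space ω* = βℕ∖ℕ has a weak P-point: there exists a nonprincipal ultrafilter U on ℕ such that for every sequence (U_n)_{n∈ℕ} of nonprincipal ultrafilters on ℕ, each distinct from U, there exists A ∈ U with A ∉ U_n for every n ∈ ℕ. -/
/-!
Following Kunen, an ultrafilter `U` is *OK* if every sequence `C n` of its members admits
uncountably many members `D j` such that any `n + 1` of them intersect inside `C n` up to a finite
set. A nonprincipal ultrafilter that omits one of the `C n` then contains only finitely many of the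
`D j`, so for countably many such ultrafilters some `D j` belongs to none of them: an OK point is a
weak P-point.

An OK point is built by transfinite recursion over all sequences, keeping enough freedom at every
stage by means of a matrix of sets `A i j m`. Within a row `i`, any `m + 1` of the sets `A i j m`
have a finite intersection, while sets of different rows are independent modulo the filter built so
far. One stage uses up finitely many rows: either some `C n` can be expelled from the filter using
finitely many rows, or a single row `i` yields the sets `D j = ⋂ m, C m ∪ A i j m`. As there are no
more sequences than rows, every stage finds an unused row.
-/

open Set Filter Cardinal Function

universe u

namespace WeakPPoint

section OK

variable {α β κ : Type*}

/-- The sets `D j` witness the OK property of `F` for the sequence `C`. Kunen's index is shifted by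
one: any `n + 1` of the `D j` intersect inside `C n` modulo a finite set. -/
structure IsOKRefinement (F : Filter α) (C : ℕ → Set α) (D : κ → Set α) : Prop where
  mem (j : κ) : D j ∈ F
  finite_sdiff (s : Finset κ) (n : ℕ) (hn : n < s.card) : ((⋂ j ∈ s, D j) \ C n).Finite

/-- Kunen's `κ`-OK filters, with an index type `κ` instead of a cardinal. -/
def IsOK (κ : Type*) (F : Filter α) : Prop :=
  ∀ C : ℕ → Set α, (∀ n, C n ∈ F) → ∃ D : κ → Set α, IsOKRefinement F C D

theorem IsOKRefinement.mono {F F' : Filter α} {C : ℕ → Set α} {D : κ → Set α}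
    (hD : IsOKRefinement F C D) (hF : F' ≤ F) : IsOKRefinement F' C D :=
  ⟨fun j ↦ hF (hD.mem j), hD.finite_sdiff⟩

theorem IsOKRefinement.mono_right {F : Filter α} {C C' : ℕ → Set α} {D : κ → Set α}
    (hD : IsOKRefinement F C D) (hC : ∀ n, C n ⊆ C' n) : IsOKRefinement F C' D :=
  ⟨hD.mem, fun s n hn ↦ (hD.finite_sdiff s n hn).subset (sdiff_subset_sdiff_right (hC n))⟩

theorem IsOKRefinement.finite_setOf_mem {F G : Filter α} {C : ℕ → Set α} {D : κ → Set α}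
    (hD : IsOKRefinement F C D) (hG : G ≤ cofinite) {n : ℕ} (hn : C n ∉ G) :
    {j | D j ∈ G}.Finite := by
  by_contra hinf
  obtain ⟨s, hsub, hcard⟩ := Set.Infinite.exists_subset_card_eq hinf (n + 1)
  have hinter : ⋂ j ∈ s, D j ∈ G := (biInter_finset_mem s).2 fun j hj ↦ hsub hj
  have hsdiff : ((⋂ j ∈ s, D j) \ C n)ᶜ ∈ G :=
    hG (hD.finite_sdiff s n (by omega)).compl_mem_cofinite
  refine hn (mem_of_superset (inter_mem hinter hsdiff) fun x ⟨hx, hxC⟩ ↦ ?_)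
  exact not_not.1 fun hxn ↦ hxC ⟨hx, hxn⟩

theorem IsOK.exists_mem_forall_notMem [Uncountable κ] {F : Filter α} (hF : IsOK κ F)
    {G : ℕ → Filter α} (hG : ∀ n, G n ≤ cofinite) (hGF : ∀ n, ¬ G n ≤ F) :
    ∃ A ∈ F, ∀ n, A ∉ G n := by
  choose B hBF hBG using fun n ↦ Filter.not_le.1 (hGF n)
  obtain ⟨D, hD⟩ := hF B hBF
  have hcount : (⋃ n, {j | D j ∈ G n}).Countable :=
    countable_iUnion fun n ↦ (hD.finite_setOf_mem (hG n) (hBG n)).countable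
  obtain ⟨j, hj⟩ : ∃ j, j ∉ ⋃ n, {j | D j ∈ G n} :=
    (ne_univ_iff_exists_notMem _).1 fun h ↦ not_countable_univ (h ▸ hcount)
  exact ⟨D j, hD.mem j, fun n hn ↦ hj (mem_iUnion.2 ⟨n, hn⟩)⟩

theorem IsOK.map {F : Filter α} (hF : IsOK κ F) {e : α → β} (he : Injective e) :
    IsOK κ (F.map e) := by
  intro C hC
  obtain ⟨D, hD⟩ := hF (fun n ↦ e ⁻¹' C n) hC
  refine ⟨fun j ↦ e '' D j, fun j ↦ image_mem_map (hD.mem j), fun s n hn ↦ ?_⟩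
  refine ((hD.finite_sdiff s n hn).image e).subset fun y ⟨hy, hyC⟩ ↦ ?_
  rw [mem_iInter₂] at hy
  obtain ⟨j, hj⟩ := Finset.card_pos.1 (n.zero_le.trans_lt hn)
  obtain ⟨x, -, rfl⟩ := hy j hj
  exact ⟨x, ⟨mem_iInter₂.2 fun j hj ↦ he.mem_set_image.1 (hy j hj), hyC⟩, rfl⟩

/-- The sequence `C` poses no obstacle to the OK property of any filter finer than `F`: some `C n`
is not a member, or there is an OK refinement. -/
def Decides (κ : Type*) (F : Filter α) (C : ℕ → Set α) : Prop :=
  (∃ n, (C n)ᶜ ∈ F) ∨ ∃ D : κ → Set α, IsOKRefinement F C D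

theorem Decides.mono {F F' : Filter α} {C : ℕ → Set α} (h : Decides κ F C) (hF : F' ≤ F) :
    Decides κ F' C :=
  h.imp (fun ⟨n, hn⟩ ↦ ⟨n, hF hn⟩) fun ⟨D, hD⟩ ↦ ⟨D, hD.mono hF⟩

theorem isOK_of_forall_decides_dissipate {F : Filter α} [F.NeBot]
    (hF : ∀ C : ℕ → Set α, Decides κ F (dissipate C)) : IsOK κ F := by
  intro C hC
  have hmem (n : ℕ) : dissipate C n ∈ F := (biInter_mem (finite_Iic n)).2 fun k _ ↦ hC k
  rcases hF C with ⟨n, hn⟩ | ⟨D, hD⟩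
  · exact absurd hn (compl_notMem (hmem n))
  · exact ⟨D, hD.mono_right fun n ↦ dissipate_subset le_rfl⟩

end OK

section IndependentLinked

variable {α ι κ : Type*}

/-- The intersection over the rows `i ∈ t` of the sets `A i j m` with `j ∈ σ i`, where `m = |σ i|`
is the least index for which a row may allow this many of its sets to meet in an infinite set. -/
def basicSet (A : ι → κ → ℕ → Set α) (t : Finset ι) (σ : ι → Finset κ) : Set α :=
  ⋂ i ∈ t, ⋂ j ∈ σ i, A i j (σ i).card

/-- Kunen's independent linked families, with rows indexed by `ι`. -/
structure IsIndependentLinked (A : ι → κ → ℕ → Set α) : Prop where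
  monotone (i : ι) (j : κ) : Monotone (A i j)
  finite_biInter (i : ι) (n : ℕ) (s : Finset κ) (hn : n < s.card) : (⋂ j ∈ s, A i j n).Finite
  infinite_basicSet (t : Finset ι) (σ : ι → Finset κ) : (basicSet A t σ).Infinite

/-- Independence modulo `F` of the rows of `A` with index in `K`. -/
def IndepOver (A : ι → κ → ℕ → Set α) (F : Filter α) (K : Set ι) : Prop :=
  ∀ (t : Finset ι) (σ : ι → Finset κ), (t : Set ι) ⊆ K → (F ⊓ 𝓟 (basicSet A t σ)).NeBot

variable {A : ι → κ → ℕ → Set α} {F F' G : Filter α} {K K' : Set ι}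

theorem basicSet_union_piecewise [DecidableEq ι] {t t' : Finset ι} (h : Disjoint t t')
    (σ σ' : ι → Finset κ) :
    basicSet A (t ∪ t') (t.piecewise σ σ') = basicSet A t σ ∩ basicSet A t' σ' := by
  rw [basicSet, Finset.set_biInter_inter]
  congr 1 <;> refine iInter₂_congr fun i hi ↦ ?_
  · rw [Finset.piecewise_eq_of_mem _ _ _ hi]
  · rw [Finset.piecewise_eq_of_notMem _ _ _ (Finset.disjoint_right.1 h hi)]

theorem basicSet_singleton (i : ι) (σ : ι → Finset κ) :
    basicSet A {i} σ = ⋂ j ∈ σ i, A i j (σ i).card :=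
  Finset.set_biInter_singleton ..

theorem IsIndependentLinked.indepOver_cofinite (hA : IsIndependentLinked A) (K : Set ι) :
    IndepOver A cofinite K :=
  fun t σ _ ↦ (hA.infinite_basicSet t σ).cofinite_inf_principal_neBot

theorem IsIndependentLinked.infinite (hA : IsIndependentLinked A) : Infinite α := by
  simpa only [basicSet, Finset.notMem_empty, iInter_of_empty, iInter_univ, infinite_univ_iff]
    using hA.infinite_basicSet ∅ fun _ ↦ ∅

theorem IndepOver.mono (h : IndepOver A F K) (hF : F ≤ F') (hK : K' ⊆ K) : IndepOver A F' K' :=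
  fun t σ ht ↦ (h t σ (ht.trans hK)).mono (inf_le_inf_right _ hF)

theorem IndepOver.neBot (h : IndepOver A F K) : F.NeBot :=
  (h ∅ (fun _ ↦ ∅) (by simp)).mono inf_le_left

theorem IndepOver.inf_principal_basicSet (h : IndepOver A F K) {t : Finset ι}
    (σ : ι → Finset κ) (ht : (t : Set ι) ⊆ K) :
    IndepOver A (F ⊓ 𝓟 (basicSet A t σ)) (K \ t) := by
  classical
  intro t' σ' ht'
  have hdisj : Disjoint t t' := Finset.disjoint_right.2 fun i hi ↦ (ht' hi).2
  rw [inf_assoc, inf_principal, ← basicSet_union_piecewise hdisj]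
  refine h _ _ ?_
  rw [Finset.coe_union]
  exact union_subset ht (ht'.trans sdiff_subset)

theorem indepOver_iInf {τ : Type*} [Nonempty τ] {f : τ → Filter α} (hf : Directed (· ≥ ·) f)
    (h : ∀ a, IndepOver A (f a) K) : IndepOver A (⨅ a, f a) K := by
  intro t σ ht
  rw [iInf_inf]
  refine iInf_neBot_of_directed' (fun a b ↦ ?_) fun a ↦ h a t σ ht
  exact (hf a b).imp fun c hc ↦ hc.imp (inf_le_inf_right _) (inf_le_inf_right _)

theorem IndepOver.inf_iInf {τ : Type*} {f : τ → Filter α} (hG : IndepOver A G K)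
    (hfG : ∀ a, f a ≤ G) (hf : Directed (· ≥ ·) f) (h : ∀ a, IndepOver A (f a) K) :
    IndepOver A (G ⊓ ⨅ a, f a) K := by
  cases isEmpty_or_nonempty τ
  · rwa [iInf_of_empty, inf_top_eq]
  · rw [inf_eq_right.2 ((iInf_le f (Classical.arbitrary τ)).trans (hfG _))]
    exact indepOver_iInf hf h

theorem IndepOver.inf_iInf_prod {τ : Type*} {p₀ : Filter α × Set ι}
    (h₀ : IndepOver A p₀.1 p₀.2) {q : τ → Filter α × Set ι} (hqp : ∀ a, q a ≤ p₀)
    (hq : Directed (· ≥ ·) q) (h : ∀ a, IndepOver A (q a).1 (q a).2) :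
    IndepOver A (p₀ ⊓ ⨅ a, q a).1 (p₀ ⊓ ⨅ a, q a).2 := by
  rw [Prod.fst_inf, Prod.fst_iInf]
  refine (h₀.mono le_rfl inf_le_left).inf_iInf (fun a ↦ (hqp a).1) (fun a b ↦ ?_) fun a ↦ ?_
  · exact (hq a b).imp fun c hc ↦ hc.imp And.left And.left
  · exact (h a).mono le_rfl (inf_le_right.trans (iInf_le q a).2)

end IndependentLinked

section SuccessorStep

variable {α ι κ : Type*} {A : ι → κ → ℕ → Set α} {F : Filter α} {K : Set ι} {C : ℕ → Set α}

theorem IsIndependentLinked.exists_isOKRefinement (hA : IsIndependentLinked A) (hC : Antitone C)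
    (h : ∀ n, IndepOver A (F ⊓ 𝓟 (C n)) K) {i : ι} (hi : i ∈ K) :
    ∃ F' ≤ F, IndepOver A F' (K \ {i}) ∧ ∃ D : κ → Set α, IsOKRefinement F' C D := by
  set D : κ → Set α := fun j ↦ ⋂ m, C m ∪ A i j m
  set E : Finset κ → Filter α := fun s ↦ F ⊓ 𝓟 (⋂ j ∈ s, D j)
  have hE : Antitone E := fun s t hst ↦
    inf_le_inf_left _ (principal_mono.2 (biInter_subset_biInter_left hst))
  have hsub (s : Finset κ) : C s.card ∩ basicSet A {i} (fun _ ↦ s) ⊆ ⋂ j ∈ s, D j := by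
    rintro x ⟨hxC, hxA⟩
    rw [basicSet_singleton, mem_iInter₂] at hxA
    refine mem_iInter₂.2 fun j hj ↦ mem_iInter.2 fun m ↦ ?_
    exact (le_total m s.card).imp (hC · hxC) (hA.monotone i j · (hxA j hj))
  refine ⟨⨅ s, E s, (iInf_le _ ∅).trans inf_le_left, ?_, D, fun j ↦ ?_, fun s n hn ↦ ?_⟩
  · refine indepOver_iInf hE.directed_ge fun s ↦ ?_
    have hs := (h s.card).inf_principal_basicSet (t := {i}) (fun _ ↦ s) (by simpa using hi)
    rw [inf_assoc, inf_principal, Finset.coe_singleton] at hs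
    exact hs.mono (inf_le_inf_left _ (principal_mono.2 (hsub s))) subset_rfl
  · refine mem_iInf_of_mem {j} (mem_inf_of_right ?_)
    rw [Finset.set_biInter_singleton]
    exact mem_principal_self _
  · refine (hA.finite_biInter i n s hn).subset fun x ⟨hx, hxC⟩ ↦ mem_iInter₂.2 fun j hj ↦ ?_
    exact (mem_iInter.1 (mem_iInter₂.1 hx j hj) n).resolve_left hxC

theorem IndepOver.exists_compl_mem (h : IndepOver A F K) {S : Set α}
    (hS : ¬ IndepOver A (F ⊓ 𝓟 S) K) :
    ∃ F' ≤ F, ∃ t : Finset ι, IndepOver A F' (K \ t) ∧ Sᶜ ∈ F' := by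
  simp only [IndepOver, not_forall, not_neBot] at hS
  obtain ⟨t, σ, ht, hbot⟩ := hS
  refine ⟨F ⊓ 𝓟 (basicSet A t σ), inf_le_left, t, h.inf_principal_basicSet σ ht, ?_⟩
  rwa [← inf_principal_eq_bot, inf_right_comm]

theorem IsIndependentLinked.exists_decides (hA : IsIndependentLinked A) (hC : Antitone C)
    (h : IndepOver A F K) (hK : K.Nonempty) :
    ∃ F' ≤ F, ∃ t : Finset ι, IndepOver A F' (K \ t) ∧ Decides κ F' C := by
  by_cases hall : ∀ n, IndepOver A (F ⊓ 𝓟 (C n)) K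
  · obtain ⟨i, hi⟩ := hK
    obtain ⟨F', hF', hind, hD⟩ := hA.exists_isOKRefinement hC hall hi
    exact ⟨F', hF', {i}, by rwa [Finset.coe_singleton], .inr hD⟩
  · obtain ⟨n, hn⟩ := not_forall.1 hall
    obtain ⟨F', hF', t, hind, hmem⟩ := h.exists_compl_mem hn
    exact ⟨F', hF', t, hind, .inl ⟨n, hmem⟩⟩

/-- `exists_decides` as a step that can be iterated: it is defined at all pairs of a filter and a
set of rows, independent or not. -/
theorem IsIndependentLinked.exists_step (hA : IsIndependentLinked A) (hC : Antitone C)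
    (p : Filter α × Set ι) :
    ∃ q ≤ p, (p.2 \ q.2).Finite ∧
      (IndepOver A p.1 p.2 → p.2.Nonempty → IndepOver A q.1 q.2 ∧ Decides κ q.1 C) := by
  by_cases hp : IndepOver A p.1 p.2 ∧ p.2.Nonempty
  · obtain ⟨F', hF', t, hind, hdec⟩ := hA.exists_decides hC hp.1 hp.2
    refine ⟨(F', p.2 \ t), ⟨hF', sdiff_subset⟩, ?_, fun _ _ ↦ ⟨hind, hdec⟩⟩
    exact t.finite_toSet.subset (sdiff_sdiff_right_self .. ▸ inter_subset_right)
  · exact ⟨p, le_rfl, by simp, fun hind hne ↦ absurd ⟨hind, hne⟩ hp⟩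

end SuccessorStep

section TransfiniteRecursion

variable {T : Type u} [LinearOrder T] [WellFoundedLT T]

/-- The state before step `c` of the transfinite recursion that starts with `p₀`, applies `next d`
at step `d`, and takes infima at limits. -/
noncomputable def stage {L : Type*} [CompleteLattice L] (next : T → L → L) (p₀ : L) : T → L :=
  wellFounded_lt.fix fun c ih ↦ p₀ ⊓ ⨅ d : Iio c, next d (ih d d.2)

section Lattice

variable {L : Type*} [CompleteLattice L] {next : T → L → L} {p₀ : L}

theorem stage_eq (c : T) : stage next p₀ c = p₀ ⊓ ⨅ d : Iio c, next d (stage next p₀ d) :=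
  wellFounded_lt.fix_eq _ c

theorem stage_le_next {c d : T} (h : d < c) : stage next p₀ c ≤ next d (stage next p₀ d) := by
  rw [stage_eq]
  exact inf_le_right.trans (iInf_le (fun d : Iio c ↦ next d (stage next p₀ d)) ⟨d, h⟩)

theorem antitone_next_stage (hnext : ∀ c p, next c p ≤ p) :
    Antitone fun c ↦ next c (stage next p₀ c) := fun d c hdc ↦ by
  rcases hdc.eq_or_lt with rfl | hlt
  · exact le_rfl
  · exact (hnext c _).trans (stage_le_next hlt)

theorem next_stage_le (hnext : ∀ c p, next c p ≤ p) (c : T) : next c (stage next p₀ c) ≤ p₀ :=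
  (hnext c _).trans ((stage_eq c).trans_le inf_le_left)

end Lattice

section Rows

variable {L : Type*} [CompleteLattice L]

theorem exists_mem_stage_sdiff_next {ι : Type*} {next : T → L × Set ι → L × Set ι} {x : L} {c : T}
    {i : ι} (hi : i ∉ (stage next (x, univ) c).2) :
    ∃ d < c, i ∈ (stage next (x, univ) d).2 \ (next d (stage next (x, univ) d)).2 := by
  induction c using WellFoundedLT.induction with
  | ind c ih =>
    obtain ⟨d, hdc, hd⟩ : ∃ d < c, i ∉ (next d (stage next (x, univ) d)).2 := by
      rw [stage_eq] at hi
      simpa [Prod.snd_iInf] using hi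
    by_cases hid : i ∈ (stage next (x, univ) d).2
    · exact ⟨d, hdc, hid, hd⟩
    · obtain ⟨d', hd', h⟩ := ih d hdc hid
      exact ⟨d', hd'.trans hdc, h⟩

theorem nonempty_stage_snd {ι : Type u} {next : T → L × Set ι → L × Set ι}
    (hfin : ∀ c p, (p.2 \ (next c p).2).Finite) (hι : ℵ₀ < #ι) {c : T} (hc : #(Iio c) < #ι)
    (x : L) :
    (stage next (x, univ) c).2.Nonempty := by
  set P := stage next (x, univ)
  have hsub : (P c).2ᶜ ⊆ ⋃ d : Iio c, (P d).2 \ (next d (P d)).2 := fun i hi ↦ by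
    obtain ⟨d, hd, hid⟩ := exists_mem_stage_sdiff_next hi
    exact mem_iUnion.2 ⟨⟨d, hd⟩, hid⟩
  have hcard : #((P c).2ᶜ : Set ι) < #ι := calc
    #((P c).2ᶜ : Set ι) ≤ #(⋃ d : Iio c, (P d).2 \ (next d (P d)).2) := mk_le_mk_of_subset hsub
    _ ≤ sum fun d : Iio c ↦ #((P d).2 \ (next d (P d)).2 : Set ι) := mk_iUnion_le_sum_mk
    _ ≤ sum fun _ : Iio c ↦ ℵ₀ := sum_le_sum _ _ fun d ↦ (hfin d _).lt_aleph0.le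
    _ = #(Iio c) * ℵ₀ := sum_const' _ _
    _ < #ι := mul_lt_of_lt hι.le hc hι
  by_contra hempty
  rw [not_nonempty_iff_eq_empty.1 hempty, compl_empty, mk_univ] at hcard
  exact hcard.false

end Rows

theorem IsIndependentLinked.exists_filter_decides {α κ : Type*} {ι : Type u}
    {A : ι → κ → ℕ → Set α} (hA : IsIndependentLinked A) (hι : ℵ₀ < #ι)
    (hT : ∀ c : T, #(Iio c) < #ι) {C : T → ℕ → Set α} (hC : ∀ c, Antitone (C c)) :
    ∃ F : Filter α, F.NeBot ∧ F ≤ cofinite ∧ ∀ c, Decides κ F (C c) := by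
  choose next hle hfin hnext using fun c ↦ hA.exists_step (hC c)
  set p₀ : Filter α × Set ι := (cofinite, univ)
  set P := stage next p₀
  have hrows (c : T) : (P c).2.Nonempty := nonempty_stage_snd hfin hι (hT c) cofinite
  have hanti : Antitone fun c ↦ next c (P c) := antitone_next_stage hle
  have hind₀ : IndepOver A p₀.1 p₀.2 := hA.indepOver_cofinite univ
  have hind (c : T) : IndepOver A (P c).1 (P c).2 := by
    induction c using WellFoundedLT.induction with
    | ind c ih =>
      rw [show P c = _ from stage_eq c]
      exact hind₀.inf_iInf_prod (fun d ↦ next_stage_le hle d.1)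
        (hanti.comp_monotone (Subtype.mono_coe _)).directed_ge
        fun d ↦ (hnext d _ (ih d d.2) (hrows d)).1
  have hstep (c : T) := hnext c _ (hind c) (hrows c)
  refine ⟨(p₀ ⊓ ⨅ c, next c (P c)).1, ?_, inf_le_left, fun c ↦ (hstep c).2.mono ?_⟩
  · exact (hind₀.inf_iInf_prod (next_stage_le hle) hanti.directed_ge fun c ↦ (hstep c).1).neBot
  · exact (inf_le_right.trans (iInf_le (fun c ↦ next c (P c)) c)).1

theorem IsIndependentLinked.exists_ultrafilter_isOK {α ι : Type u} {κ : Type*}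
    {A : ι → κ → ℕ → Set α} (hA : IsIndependentLinked A) (hι : #(ℕ → Set α) ≤ #ι) :
    ∃ U : Ultrafilter α, (U : Filter α) ≤ cofinite ∧ IsOK κ (U : Filter α) := by
  have := hA.infinite
  have hlt : ℵ₀ < #(ℕ → Set α) := by
    simpa using cantor' ℵ₀ (one_lt_iff_nontrivial.2 (inferInstance : Nontrivial (Set α)))
  obtain ⟨e⟩ : Nonempty ((#(ℕ → Set α)).ord.ToType ≃ (ℕ → Set α)) :=
    Cardinal.eq.1 (mk_ord_toType _)
  obtain ⟨F, _, hcof, hdec⟩ := hA.exists_filter_decides (hlt.trans_le hι)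
    (fun c ↦ (mk_Iio_lt c (by simp)).trans_le ((mk_ord_toType _).trans_le hι))
    (C := fun c ↦ dissipate (e c)) fun c ↦ antitone_dissipate
  have hmem := Ultrafilter.of_le F
  refine ⟨.of F, hmem.trans hcof, isOK_of_forall_decides_dissipate fun C ↦ ?_⟩
  simpa only [e.apply_symm_apply] using (hdec (e.symm C)).mono hmem

end TransfiniteRecursion

section Kunen

/-- The points of Kunen's countable set: a level `k`, with a family of subsets of `Fin k` attached
to every subset of `Fin k`. -/
abbrev KunenPoint : Type := Σ k : ℕ, (Set (Fin k) → Finset (Set (Fin k)))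

/-- The restriction of `X` to level `k`. -/
def trace (k : ℕ) (X : Set ℕ) : Set (Fin k) := (↑) ⁻¹' X

/-- Kunen's independent linked family. Both rows and columns are indexed by sets of naturals. -/
def kunenFamily (Y X : Set ℕ) (n : ℕ) : Set KunenPoint :=
  {p | (p.2 (trace p.1 Y)).card ≤ n ∧ trace p.1 X ∈ p.2 (trace p.1 Y)}

theorem eventually_trace_ne {X Y : Set ℕ} (h : X ≠ Y) : ∀ᶠ k in atTop, trace k X ≠ trace k Y := by
  obtain ⟨a, ha⟩ : ∃ a, ¬ (a ∈ X ↔ a ∈ Y) := not_forall.1 fun hXY ↦ h (Set.ext hXY)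
  filter_upwards [eventually_gt_atTop a] with k hk heq
  exact ha (Set.ext_iff.1 heq ⟨a, hk⟩)

theorem eventually_injOn_trace (s : Finset (Set ℕ)) :
    ∀ᶠ k in atTop, InjOn (trace k) (s : Set (Set ℕ)) := by
  have hpairs : ∀ᶠ k in atTop, ∀ X ∈ s, ∀ Y ∈ s, X ≠ Y → trace k X ≠ trace k Y := by
    refine s.eventually_all.2 fun X _ ↦ s.eventually_all.2 fun Y _ ↦ ?_
    exact eventually_imp_distrib_left.2 eventually_trace_ne
  filter_upwards [hpairs] with k hk X hX Y hY
  exact not_imp_not.1 (hk X hX Y hY)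

theorem tendsto_kunenPoint_fst : Tendsto (Sigma.fst : KunenPoint → ℕ) cofinite atTop := by
  rw [← Nat.cofinite_eq_atTop]
  refine .cofinite_of_finite_preimage_singleton fun k ↦ ?_
  refine (finite_range (Sigma.mk k)).subset ?_
  rintro ⟨_, f⟩ rfl
  exact mem_range_self f

theorem finite_biInter_kunenFamily (Y : Set ℕ) (n : ℕ) (s : Finset (Set ℕ)) (hn : n < s.card) :
    (⋂ X ∈ s, kunenFamily Y X n).Finite := by
  classical
  suffices h : ∀ᶠ p in cofinite, p ∉ ⋂ X ∈ s, kunenFamily Y X n by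
    simpa only [eventually_cofinite, not_not, ofPred_mem_eq] using h
  filter_upwards [tendsto_kunenPoint_fst.eventually (eventually_injOn_trace s)] with p hinj hp
  rw [mem_iInter₂] at hp
  obtain ⟨X, hX⟩ := Finset.card_pos.1 (n.zero_le.trans_lt hn)
  have hsub : s.image (trace p.1) ⊆ p.2 (trace p.1 Y) :=
    Finset.image_subset_iff.2 fun X hX ↦ (hp X hX).2
  have hle : s.card ≤ n := calc
    s.card = (s.image (trace p.1)).card := (Finset.card_image_of_injOn hinj).symm
    _ ≤ (p.2 (trace p.1 Y)).card := Finset.card_le_card hsub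
    _ ≤ n := (hp X hX).1
  exact hn.not_ge hle

theorem exists_mem_basicSet_kunenFamily {t : Finset (Set ℕ)} (σ : Set ℕ → Finset (Set ℕ)) {k : ℕ}
    (hk : InjOn (trace k) (t : Set (Set ℕ))) : ∃ p ∈ basicSet kunenFamily t σ, p.1 = k := by
  classical
  let f : Set (Fin k) → Finset (Set (Fin k)) := fun Z ↦
    (σ (invFunOn (trace k) t Z)).image (trace k)
  refine ⟨⟨k, f⟩, mem_iInter₂.2 fun Y hY ↦ mem_iInter₂.2 fun X hX ↦ ?_, rfl⟩
  have hf : f (trace k Y) = (σ Y).image (trace k) := by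
    simp only [f, hk.leftInvOn_invFunOn hY]
  change (f (trace k Y)).card ≤ _ ∧ trace k X ∈ f (trace k Y)
  rw [hf]
  exact ⟨Finset.card_image_le, Finset.mem_image_of_mem _ hX⟩

theorem infinite_basicSet_kunenFamily (t : Finset (Set ℕ)) (σ : Set ℕ → Finset (Set ℕ)) :
    (basicSet kunenFamily t σ).Infinite := by
  have hlevels : {k | InjOn (trace k) (t : Set (Set ℕ))}.Infinite :=
    Nat.frequently_atTop_iff_infinite.1 (eventually_injOn_trace t).frequently
  exact .of_image Sigma.fst (hlevels.mono fun k hk ↦ exists_mem_basicSet_kunenFamily σ hk)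

theorem isIndependentLinked_kunenFamily : IsIndependentLinked kunenFamily where
  monotone _ _ _ _ hmn _ hp := ⟨hp.1.trans hmn, hp.2⟩
  finite_biInter := finite_biInter_kunenFamily
  infinite_basicSet := infinite_basicSet_kunenFamily

end Kunen

theorem exists_ultrafilter_isOK (α : Type*) [Infinite α] :
    ∃ U : Ultrafilter α, (U : Filter α) ≤ cofinite ∧ IsOK (Set ℕ) (U : Filter α) := by
  obtain ⟨U, hcof, hU⟩ := isIndependentLinked_kunenFamily.exists_ultrafilter_isOK (by simp)
  obtain ⟨e, he⟩ := exists_injective_nat KunenPoint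
  have hinj : Injective (Infinite.natEmbedding α ∘ e) := (Infinite.natEmbedding α).injective.comp he
  exact ⟨U.map (Infinite.natEmbedding α ∘ e), hinj.tendsto_cofinite.mono_left hcof, hU.map hinj⟩

theorem ultrafilter_le_cofinite_iff {α : Type*} {U : Ultrafilter α} :
    (U : Filter α) ≤ cofinite ↔ ∀ A ∈ U, A.Infinite := by
  refine ⟨fun hU A hA hfin ↦ ?_, fun hU A hA ↦ ?_⟩
  · exact U.compl_notMem_iff.2 hA (hU hfin.compl_mem_cofinite)
  · exact Ultrafilter.compl_notMem_iff.1 fun hAc ↦ hU _ hAc hA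

end WeakPPoint

open WeakPPoint in
theorem exists_weak_P_point_omega_star_general (α : Type*) [Infinite α] :
    ∃ U : Ultrafilter α,
      (∀ A : Set α, A ∈ U → A.Infinite) ∧
      ∀ V : ℕ → Ultrafilter α,
        (∀ n : ℕ, (∀ A : Set α, A ∈ V n → A.Infinite) ∧ V n ≠ U) →
        ∃ A ∈ U, ∀ n : ℕ, A ∉ V n := by
  obtain ⟨U, hcof, hU⟩ := exists_ultrafilter_isOK α
  have : Uncountable (Set ℕ) := aleph0_lt_mk_iff.1 (by simpa using aleph0_lt_continuum)
  refine ⟨U, ultrafilter_le_cofinite_iff.1 hcof, fun V hV ↦ ?_⟩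
  exact hU.exists_mem_forall_notMem (G := fun n ↦ V n)
    (fun n ↦ ultrafilter_le_cofinite_iff.2 (hV n).1)
    fun n hle ↦ (hV n).2 (Ultrafilter.coe_le_coe.1 hle)

/-- Corollary 1: `ω* = βℕ∖ℕ` has a weak P-point.  Points of `ω*` are the nonprincipal
ultrafilters on `ℕ`, i.e. ultrafilters all of whose members are infinite. -/
theorem exists_weak_P_point_omega_star :
    ∃ U : Ultrafilter ℕ,
      (∀ A : Set ℕ, A ∈ U → A.Infinite) ∧
      ∀ V : ℕ → Ultrafilter ℕ,
        (∀ n : ℕ, (∀ A : Set ℕ, A ∈ V n → A.Infinite) ∧ V n ≠ U) →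
        ∃ A ∈ U, ∀ n : ℕ, A ∉ V n :=
  exists_weak_P_point_omega_star_general ℕ
end
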